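/- Let R ⊆ S_n be a top-k partial ranking and let τ ∈ S_n be arbitrary. Then there is a unique closest element of R to τ in Kendall distance: the set argmin_{σ ∈ R} d(σ, τ) has exactly one element. -/

import Mathlib

/-- The Kendall (tau) distance between two permutations of `Fin n`:
the number of pairs `(x, y)` with `x < y` on which `σ⁻¹` and `τ⁻¹`
disagree in relative order. -/
def kendallDist {n : ℕ} (σ τ : Equiv.Perm (Fin n)) : ℕ :=
  (Finset.univ.filter (fun p : Fin n × Fin n =>
    p.1 < p.2 ∧ ¬((σ⁻¹ p.1 < σ⁻¹ p.2) ↔ (τ⁻¹ p.1 < τ⁻¹ p.2)))).card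

/-- The top-`k` partial ranking determined by the items `a 0, …, a (k-1)`:
the set of full rankings (permutations) `σ` with `σ i = a i` for the first
`k` positions. -/
def topkFinset {n k : ℕ} (hk : k ≤ n) (a : Fin k → Fin n) :
    Finset (Equiv.Perm (Fin n)) :=
  Finset.univ.filter fun σ => ∀ i : Fin k, σ (Fin.castLE hk i) = a i

/-- The permutation of `Fin n` fixing the first `k` positions and reversing
the order of the remaining `n - k` positions. -/
def revAfter (n k : ℕ) : Equiv.Perm (Fin n) :=
  Function.Involutive.toPerm
    (fun p => if _h : (p : ℕ) < k then p
      else ⟨n + k - 1 - (p : ℕ), by have := p.isLt; omega⟩)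
    (by
      intro p
      have hp := p.isLt
      by_cases h : (p : ℕ) < k
      · simp [h]
      · have h2 : ¬ (n + k - 1 - (p : ℕ) < k) := by omega
        simp only [dif_neg h, dif_neg h2]
        ext
        simp
        omega)

/-- The antithetic permutation of `σ` relative to a top-`k` partial ranking:
the first `k` positions are unchanged and the remaining positions are
reversed, i.e. `A σ (k+j) = σ (n+1-j)` (in 1-indexed notation). -/
def antithetic (n k : ℕ) (σ : Equiv.Perm (Fin n)) : Equiv.Perm (Fin n) :=
  σ * revAfter n k

/-!
All rankings in `R` order the pairs of items that meet the top `k` in the same way. Let `π ∈ R` list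
the remaining items in the order of `τ`. Then `π` disagrees with `τ` only on pairs on which every
`σ ∈ R` disagrees with `τ`, so `π` is closest. If `σ ∈ R` is as close as `π`, then both disagree
with `τ` on the same pairs; hence they order all pairs alike, so `σ = π`.
-/

section Discordance

variable {α β γ δ : Type*} [Fintype α] [LinearOrder α] [LinearOrder β] [LinearOrder γ]
  [LinearOrder δ]

/-- The pairs `x < y` ordered differently by the position functions `f` and `g`. The Kendall
distance of `σ` and `τ` counts these pairs for `f = σ⁻¹` and `g = τ⁻¹`. -/
def discordantPairs (f : α → β) (g : α → γ) : Finset (α × α) :=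
  {p | p.1 < p.2 ∧ ¬(f p.1 < f p.2 ↔ g p.1 < g p.2)}

theorem mem_discordantPairs {f : α → β} {g : α → γ} {p : α × α} :
    p ∈ discordantPairs f g ↔ p.1 < p.2 ∧ ¬(f p.1 < f p.2 ↔ g p.1 < g p.2) := by
  simp [discordantPairs]

theorem lt_iff_lt_of_discordantPairs_eq {f : α → β} {g : α → γ} {h : α → δ}
    (hf : f.Injective) (hg : g.Injective) (hfg : discordantPairs f h = discordantPairs g h)
    (x y : α) : f x < f y ↔ g x < g y := by
  have of_lt {x y : α} (hxy : x < y) : f x < f y ↔ g x < g y := by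
    have hmem := Finset.ext_iff.1 hfg (x, y)
    simp only [mem_discordantPairs, hxy, true_and] at hmem
    tauto
  rcases lt_trichotomy x y with hxy | rfl | hyx
  · exact of_lt hxy
  · simp only [lt_irrefl]
  · rw [← not_iff_not, not_lt, not_lt, (hf.ne hyx.ne).le_iff_lt, (hg.ne hyx.ne).le_iff_lt]
    exact of_lt hyx

end Discordance

theorem equiv_eq_of_lt_iff_lt {α β : Type*} [LinearOrder β] [WellFoundedLT β] {f g : α ≃ β}
    (h : ∀ x y, f x < f y ↔ g x < g y) : f = g := by
  let e : β ≃o β := (f.symm.trans g).toOrderIso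
    (StrictMono.monotone fun i j hij => (h _ _).1 (by simpa using hij))
    (StrictMono.monotone fun i j hij => (h _ _).2 (by simpa using hij))
  have he : e = OrderIso.refl β := Subsingleton.elim _ _
  ext x
  simpa [e] using (DFunLike.congr_fun he (f x)).symm

theorem exists_strictMono_comp_range_eq {α β : Type*} [LinearOrder β] {f : α → β}
    (hf : f.Injective) {s : Finset α} {m : ℕ} (hs : s.card = m) :
    ∃ b : Fin m → α, StrictMono (f ∘ b) ∧ Set.range b = s :=
  letI := LinearOrder.lift' f hf
  ⟨s.orderEmbOfFin hs, (s.orderEmbOfFin hs).strictMono, s.range_orderEmbOfFin hs⟩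

section Kendall

variable {n : ℕ}

theorem kendallDist_eq_card_discordantPairs (σ τ : Equiv.Perm (Fin n)) :
    kendallDist σ τ = (discordantPairs ⇑σ⁻¹ ⇑τ⁻¹).card :=
  rfl

theorem eq_of_discordantPairs_inv_eq {σ π τ : Equiv.Perm (Fin n)}
    (h : discordantPairs ⇑σ⁻¹ ⇑τ⁻¹ = discordantPairs ⇑π⁻¹ ⇑τ⁻¹) : σ = π :=
  inv_injective <| equiv_eq_of_lt_iff_lt <|
    lt_iff_lt_of_discordantPairs_eq σ⁻¹.injective π⁻¹.injective h

theorem kendallDist_le_of_discordantPairs_subset {σ π τ : Equiv.Perm (Fin n)}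
    (h : discordantPairs ⇑π⁻¹ ⇑τ⁻¹ ⊆ discordantPairs ⇑σ⁻¹ ⇑τ⁻¹) :
    kendallDist π τ ≤ kendallDist σ τ := by
  simpa only [kendallDist_eq_card_discordantPairs] using Finset.card_le_card h

theorem eq_of_discordantPairs_subset_of_kendallDist_le {σ π τ : Equiv.Perm (Fin n)}
    (h : discordantPairs ⇑π⁻¹ ⇑τ⁻¹ ⊆ discordantPairs ⇑σ⁻¹ ⇑τ⁻¹)
    (hle : kendallDist σ τ ≤ kendallDist π τ) : σ = π := by
  simp only [kendallDist_eq_card_discordantPairs] at hle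
  exact eq_of_discordantPairs_inv_eq (Finset.eq_of_subset_of_card_le h hle).symm

end Kendall

section TopK

variable {n k : ℕ} {hk : k ≤ n} {a : Fin k → Fin n} {σ π τ : Equiv.Perm (Fin n)}

theorem mem_topkFinset : σ ∈ topkFinset hk a ↔ ∀ i : Fin k, σ (Fin.castLE hk i) = a i := by
  simp [topkFinset]

theorem inv_apply_of_mem_topkFinset (hσ : σ ∈ topkFinset hk a) (i : Fin k) :
    σ⁻¹ (a i) = Fin.castLE hk i := by
  rw [Equiv.Perm.inv_eq_iff_eq, mem_topkFinset.1 hσ i]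

theorem inv_lt_inv_apply_iff_of_mem_topkFinset (hσ : σ ∈ topkFinset hk a) (x : Fin n)
    (i : Fin k) : σ⁻¹ x < σ⁻¹ (a i) ↔ ∃ j < i, a j = x := by
  rw [inv_apply_of_mem_topkFinset hσ]
  constructor
  · intro hx
    refine ⟨⟨σ⁻¹ x, lt_trans (Fin.lt_def.1 hx) i.isLt⟩, hx, ?_⟩
    rw [← mem_topkFinset.1 hσ]
    exact σ.apply_symm_apply x
  · rintro ⟨j, hj, rfl⟩
    rwa [inv_apply_of_mem_topkFinset hσ, Fin.castLE_lt_castLE_iff]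

theorem inv_apply_lt_inv_iff_of_mem_topkFinset (hσ : σ ∈ topkFinset hk a) (i : Fin k)
    (y : Fin n) : σ⁻¹ (a i) < σ⁻¹ y ↔ ∀ j ≤ i, a j ≠ y := by
  rw [← not_le, le_iff_lt_or_eq, inv_lt_inv_apply_iff_of_mem_topkFinset hσ,
    σ⁻¹.injective.eq_iff, eq_comm (a := y)]
  simp only [not_or, not_exists, not_and, le_iff_lt_or_eq, or_imp, forall_and, forall_eq, ne_eq]

theorem inv_lt_inv_iff_of_mem_topkFinset (hσ : σ ∈ topkFinset hk a) (hπ : π ∈ topkFinset hk a)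
    {x y : Fin n} (hxy : x ∈ Set.range a ∨ y ∈ Set.range a) :
    σ⁻¹ x < σ⁻¹ y ↔ π⁻¹ x < π⁻¹ y := by
  rcases hxy with ⟨i, rfl⟩ | ⟨i, rfl⟩
  · rw [inv_apply_lt_inv_iff_of_mem_topkFinset hσ, inv_apply_lt_inv_iff_of_mem_topkFinset hπ]
  · rw [inv_lt_inv_apply_iff_of_mem_topkFinset hσ, inv_lt_inv_apply_iff_of_mem_topkFinset hπ]

theorem discordantPairs_subset_of_mem_topkFinset (hπ : π ∈ topkFinset hk a)
    (hσ : σ ∈ topkFinset hk a)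
    (hπτ : ∀ x ∉ Set.range a, ∀ y ∉ Set.range a, (π⁻¹ x < π⁻¹ y ↔ τ⁻¹ x < τ⁻¹ y)) :
    discordantPairs ⇑π⁻¹ ⇑τ⁻¹ ⊆ discordantPairs ⇑σ⁻¹ ⇑τ⁻¹ := by
  rintro ⟨x, y⟩ hp
  rw [mem_discordantPairs] at hp ⊢
  by_cases hxy : x ∈ Set.range a ∨ y ∈ Set.range a
  · rwa [inv_lt_inv_iff_of_mem_topkFinset hσ hπ hxy]
  · rw [not_or] at hxy
    exact absurd (hπτ x hxy.1 y hxy.2) hp.2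

variable (hk τ) in
theorem exists_mem_topkFinset_inv_lt_inv_iff (ha : a.Injective) :
    ∃ π ∈ topkFinset hk a, ∀ x ∉ Set.range a, ∀ y ∉ Set.range a,
      (π⁻¹ x < π⁻¹ y ↔ τ⁻¹ x < τ⁻¹ y) := by
  obtain ⟨m, rfl⟩ := Nat.exists_eq_add_of_le hk
  have hcard : (Finset.univ.image a)ᶜ.card = m := by
    simp [Finset.card_compl, Finset.card_image_of_injective _ ha]
  obtain ⟨b, hb, hrange⟩ := exists_strictMono_comp_range_eq τ⁻¹.injective hcard
  replace hrange : Set.range b = (Set.range a)ᶜ := by simpa using hrange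
  have hinj : (Fin.append a b).Injective := Fin.append_injective_iff.2
    ⟨ha, hb.injective.of_comp, fun i j hij => hrange.le ⟨j, rfl⟩ ⟨i, hij⟩⟩
  let π : Equiv.Perm (Fin (k + m)) := .ofBijective _ (Finite.injective_iff_bijective.1 hinj)
  have hπb (j : Fin m) : π⁻¹ (b j) = Fin.natAdd k j := by
    rw [Equiv.Perm.inv_eq_iff_eq]
    exact (Fin.append_right a b j).symm
  refine ⟨π, mem_topkFinset.2 fun i => Fin.append_left a b i, fun x hx y hy => ?_⟩
  obtain ⟨i, rfl⟩ := hrange.ge hx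
  obtain ⟨j, rfl⟩ := hrange.ge hy
  rw [hπb, hπb, Fin.natAdd_lt_natAdd_iff]
  exact hb.lt_iff_lt.symm

end TopK

/-- For a top-`k` partial ranking `R` (determined by distinct items) and any
`τ ∈ S_n`, there is a unique closest element of `R` to `τ` in Kendall
distance: the argmin set has exactly one element. -/
theorem exists_unique_closest {n k : ℕ} (hk : k ≤ n) (a : Fin k → Fin n)
    (ha : Function.Injective a) (τ : Equiv.Perm (Fin n)) :
    ∃! π : Equiv.Perm (Fin n), π ∈ topkFinset hk a ∧
      ∀ σ ∈ topkFinset hk a, kendallDist π τ ≤ kendallDist σ τ := by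
  obtain ⟨π, hπ, hπτ⟩ := exists_mem_topkFinset_inv_lt_inv_iff hk τ ha
  have hsub (σ) (hσ : σ ∈ topkFinset hk a) :=
    discordantPairs_subset_of_mem_topkFinset hπ hσ hπτ
  exact ⟨π, ⟨hπ, fun σ hσ => kendallDist_le_of_discordantPairs_subset (hsub σ hσ)⟩,
    fun σ ⟨hσ, hmin⟩ =>
      eq_of_discordantPairs_subset_of_kendallDist_le (hsub σ hσ) (hmin π hπ)⟩
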